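/- Let Φ be a positive linear map from n×n to m×m complex matrices, let f : ℝ → ℝ be operator monotone on [0,∞), and let A, B be positive definite n×n complex matrices with s·A ≤ B ≤ t·A for some scalars 0 < s ≤ t with s·t ≤ 1. Then (Φ(f(A)) + Φ(f(B)))/2 ≤ ((√s+√t)/(2√(st)))²·Φ(f(A ! B)). -/

import Mathlib

open Matrix ComplexOrder

/-- Loewner order: `A ≤ B` iff `B - A` is positive semidefinite. -/
def LoewnerLE {n : Type} [Fintype n] (A B : Matrix n n ℂ) : Prop := (B - A).PosSemidef

/-- The positive square root of a (Hermitian) matrix, via the continuous functional calculus. -/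
noncomputable def msqrt {n : Type} [Fintype n] [DecidableEq n] (A : Matrix n n ℂ) :
    Matrix n n ℂ := cfc Real.sqrt A

/-- The arithmetic mean `A ∇ B = (A + B)/2`. -/
noncomputable def amean {n : Type} [Fintype n] [DecidableEq n] (A B : Matrix n n ℂ) :
    Matrix n n ℂ := (2 : ℝ)⁻¹ • (A + B)

/-- The harmonic mean `A ! B = ((A⁻¹ + B⁻¹)/2)⁻¹`. -/
noncomputable def hmean {n : Type} [Fintype n] [DecidableEq n] (A B : Matrix n n ℂ) :
    Matrix n n ℂ := ((2 : ℝ)⁻¹ • (A⁻¹ + B⁻¹))⁻¹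

/-- The geometric mean `A ♯ B = A^(1/2) (A^(-1/2) B A^(-1/2))^(1/2) A^(1/2)`. -/
noncomputable def gmean {n : Type} [Fintype n] [DecidableEq n] (A B : Matrix n n ℂ) :
    Matrix n n ℂ := msqrt A * msqrt ((msqrt A)⁻¹ * B * (msqrt A)⁻¹) * msqrt A

/-- `f : ℝ → ℝ` is operator monotone on `[0,∞)`: it is continuous and nonnegative on `[0,∞)`
and monotone on positive-semidefinite complex matrices of every finite size, with `f` applied
via the continuous functional calculus. -/
def OpMonotone (f : ℝ → ℝ) : Prop :=
  ContinuousOn f (Set.Ici 0) ∧ (∀ x : ℝ, 0 ≤ x → 0 ≤ f x) ∧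
    ∀ (k : Type) [Fintype k] [DecidableEq k] (X Y : Matrix k k ℂ),
      X.PosSemidef → LoewnerLE X Y → LoewnerLE (cfc f X) (cfc f Y)

/-- `g : ℝ → ℝ` is operator monotone decreasing on `(0,∞)`: it is continuous and nonnegative on
`(0,∞)` and antitone on positive-definite complex matrices of every finite size, with `g` applied
via the continuous functional calculus. -/
def OpAntitone (g : ℝ → ℝ) : Prop :=
  ContinuousOn g (Set.Ioi 0) ∧ (∀ x : ℝ, 0 < x → 0 ≤ g x) ∧
    ∀ (k : Type) [Fintype k] [DecidableEq k] (X Y : Matrix k k ℂ),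
      X.PosDef → Y.PosDef → LoewnerLE X Y → LoewnerLE (cfc g Y) (cfc g X)


open Polynomial in
theorem aux_poly (f : ℝ → ℝ) (S : Set ℝ) (hS : S.Finite) : ∃ p : ℝ[X], ∀ x ∈ S, p.eval x = f x := by
  classical
  refine ⟨Lagrange.interpolate hS.toFinset id f, fun x hx => ?_⟩
  have := Lagrange.eval_interpolate_at_node (s := hS.toFinset) (v := id) (i := x) f
    (Function.injective_id.injOn) (by simpa using hx)
  simpa using this

theorem aux_spec_fin {k : Type} [Fintype k] [DecidableEq k] {Z : Matrix k k ℂ} (hZ : Z.IsHermitian) :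
    (spectrum ℝ Z).Finite := by
  rw [hZ.spectrum_real_eq_range_eigenvalues]; exact Set.finite_range _

theorem aux_cfc_aeval {k : Type} [Fintype k] [DecidableEq k] {Z : Matrix k k ℂ} (hZ : Z.IsHermitian)
    (f : ℝ → ℝ) (p : Polynomial ℝ) (hp : ∀ x ∈ spectrum ℝ Z, p.eval x = f x) :
    cfc f Z = Polynomial.aeval Z p := by
  rw [← cfc_polynomial p Z hZ]
  exact cfc_congr fun x hx => (hp x hx).symm

theorem aux_cfc_blocks {k l : Type} [Fintype k] [DecidableEq k] [Fintype l] [DecidableEq l]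
    {P : Matrix k k ℂ} {Q : Matrix l l ℂ}
    (hP : P.IsHermitian) (hQ : Q.IsHermitian) (f : ℝ → ℝ) :
    cfc f (fromBlocks P 0 0 Q) = fromBlocks (cfc f P) 0 0 (cfc f Q) := by
  have hZ : (fromBlocks P 0 0 Q).IsHermitian := by
    rw [IsHermitian, fromBlocks_conjTranspose, hP.eq, hQ.eq]; simp
  obtain ⟨p, hp⟩ := aux_poly f _ ((aux_spec_fin hP).union ((aux_spec_fin hQ).union (aux_spec_fin hZ)))
  rw [aux_cfc_aeval hP f p fun x hx => hp x (Or.inl hx),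
    aux_cfc_aeval hQ f p fun x hx => hp x (Or.inr (Or.inl hx)),
    aux_cfc_aeval hZ f p fun x hx => hp x (Or.inr (Or.inr hx))]
  clear hp
  induction p using Polynomial.induction_on' with
  | add p q h1 h2 => simp [h1, h2, fromBlocks_add]
  | monomial n a =>
    have h : ∀ n : ℕ, (fromBlocks P 0 0 Q) ^ n = fromBlocks (P ^ n) 0 0 (Q ^ n) := by
      intro n
      induction n with
      | zero => simp
      | succ n ih => simp [pow_succ, ih, fromBlocks_multiply]
    simp only [Polynomial.aeval_monomial, h, ← Algebra.smul_def, fromBlocks_smul, smul_zero]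

theorem aux_cfc_conj {k : Type} [Fintype k] [DecidableEq k]
    {Z U : Matrix k k ℂ} (hZ : Z.IsHermitian) (hU : U * Uᴴ = 1) (f : ℝ → ℝ) :
    cfc f (Uᴴ * Z * U) = Uᴴ * cfc f Z * U := by
  have hZ' : (Uᴴ * Z * U).IsHermitian := isHermitian_conjTranspose_mul_mul U hZ
  have hU' : Uᴴ * U = 1 := mul_eq_one_comm.mp hU
  obtain ⟨p, hp⟩ := aux_poly f _ ((aux_spec_fin hZ).union (aux_spec_fin hZ'))
  rw [aux_cfc_aeval hZ f p fun x hx => hp x (Or.inl hx),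
    aux_cfc_aeval hZ' f p fun x hx => hp x (Or.inr hx)]
  clear hp
  induction p using Polynomial.induction_on' with
  | add p q h1 h2 => simp [h1, h2, mul_add, add_mul]
  | monomial n a =>
    have h : ∀ n : ℕ, (Uᴴ * Z * U) ^ n = Uᴴ * Z ^ n * U := by
      intro n
      induction n with
      | zero => simp [hU']
      | succ n ih =>
        rw [pow_succ, ih, pow_succ]
        calc Uᴴ * Z ^ n * U * (Uᴴ * Z * U) = Uᴴ * Z ^ n * (U * Uᴴ) * Z * U := by
              simp only [Matrix.mul_assoc]
          _ = _ := by rw [hU]; simp only [Matrix.mul_assoc, Matrix.mul_one, Matrix.one_mul]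
    simp only [Polynomial.aeval_monomial, h, ← Algebra.smul_def, Matrix.mul_smul, Matrix.smul_mul]

theorem aux_bound {k : Type} [Fintype k] [DecidableEq k] {N : Matrix k k ℂ} (hN : N.IsHermitian) :
    ∃ c : ℝ, (c • (1 : Matrix k k ℂ) - N).PosSemidef := by
  obtain ⟨c, hc⟩ := (aux_spec_fin hN).bddAbove
  refine ⟨c, ?_⟩
  have h : c • (1 : Matrix k k ℂ) - N = cfc (fun x => c - x) N := by
    have hs : IsSelfAdjoint N := hN
    rw [cfc_sub (fun _ => c) (fun x => x) N, cfc_const c N hs, cfc_id' ℝ N hs, Algebra.algebraMap_eq_smul_one]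
  rw [h, hN.cfc_eq, IsHermitian.cfc, Unitary.conjStarAlgAut_apply]
  refine PosSemidef.mul_mul_conjTranspose_same (PosSemidef.diagonal fun i => ?_) _
  have : hN.eigenvalues i ≤ c := hc (hN.eigenvalues_mem_spectrum_real i)
  simpa using this

theorem aux_limit {k : Type} [Fintype k] [DecidableEq k] {M L : Matrix k k ℂ} (hM : M.PosSemidef)
    (hL : L.IsHermitian)
    (f : ℝ → ℝ) (hf : ContinuousOn f (Set.Ici 0))
    (h : ∀ e : ℝ, 0 < e → (cfc f (M + e • (1 : Matrix k k ℂ)) - L).PosSemidef) :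
    (cfc f M - L).PosSemidef := by
  have hMs : IsSelfAdjoint M := hM.1
  have key : ∀ e : ℝ, cfc f (M + e • (1 : Matrix k k ℂ)) = cfc (fun x => f (x + e)) M := by
    intro e
    rw [cfc_comp' f (fun x => x + e) M (((aux_spec_fin hM.1).image _).continuousOn _) (by fun_prop) hMs,
      cfc_add_const e (fun x => x) M (by fun_prop) hMs, cfc_id' ℝ M hMs,
      Algebra.algebraMap_eq_smul_one]
  have hsa : (cfc f M).IsHermitian := cfc_predicate f M
  refine PosSemidef.of_dotProduct_mulVec_nonneg (hsa.sub hL) fun x => ?_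
  have ht : Filter.Tendsto (fun e : ℝ => star x ⬝ᵥ ((cfc (fun x => f (x + e)) M - L) *ᵥ x))
      (nhdsWithin 0 (Set.Ioi 0)) (nhds (star x ⬝ᵥ ((cfc f M - L) *ᵥ x))) := by
    have h1 : Filter.Tendsto (fun e : ℝ => cfc (fun x => f (x + e)) M)
      (nhdsWithin 0 (Set.Ioi 0)) (nhds (cfc f M)) := by
      simp only [hM.1.cfc_eq, IsHermitian.cfc, Unitary.conjStarAlgAut_apply]
      refine Filter.Tendsto.mul (Filter.Tendsto.mul tendsto_const_nhds ?_) tendsto_const_nhds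
      refine ((Continuous.matrix_diagonal continuous_id).tendsto _).comp ?_
      rw [tendsto_pi_nhds]
      intro i
      refine (Complex.continuous_ofReal.tendsto (f (hM.1.eigenvalues i))).comp ?_
      have h0 : 0 ≤ hM.1.eigenvalues i := hM.eigenvalues_nonneg i
      refine Filter.Tendsto.comp (g := f) (f := fun e : ℝ => hM.1.eigenvalues i + e) (hf (hM.1.eigenvalues i) h0) ?_
      rw [tendsto_nhdsWithin_iff]
      constructor
      · have : Filter.Tendsto (fun e : ℝ => hM.1.eigenvalues i + e) (nhds 0)
          (nhds (hM.1.eigenvalues i + 0)) := (by fun_prop : Continuous _).tendsto _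
        rw [add_zero] at this
        exact this.mono_left nhdsWithin_le_nhds
      · filter_upwards [self_mem_nhdsWithin] with e he
        exact add_nonneg h0 (le_of_lt he)
    have h2 : Continuous (fun Z : Matrix k k ℂ => star x ⬝ᵥ ((Z - L) *ᵥ x)) := by fun_prop
    exact (h2.tendsto _).comp h1
  refine ge_of_tendsto ht ?_
  filter_upwards [self_mem_nhdsWithin] with e he
  rw [← key]
  exact (h e he).dotProduct_mulVec_nonneg x

theorem aux_concave {k : Type} [Fintype k] [DecidableEq k] (f : ℝ → ℝ) (hf : OpMonotone f)
    {X Y : Matrix k k ℂ} (hX : X.PosSemidef) (hY : Y.PosSemidef) (a b : ℝ) (ha : 0 ≤ a) (hb : 0 ≤ b)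
    (hab : a + b = 1) :
    (cfc f (a • X + b • Y) - (a • cfc f X + b • cfc f Y)).PosSemidef := by
  obtain ⟨c, hc⟩ : ∃ c : ℝ, c * c = a := ⟨√a, Real.mul_self_sqrt ha⟩
  obtain ⟨d, hd⟩ : ∃ d : ℝ, d * d = b := ⟨√b, Real.mul_self_sqrt hb⟩
  have hfX : (cfc f X).IsHermitian := cfc_predicate f X
  have hfY : (cfc f Y).IsHermitian := cfc_predicate f Y
  have hM : (a • X + b • Y).PosSemidef := (hX.smul ha).add (hY.smul hb)
  have hsm : ∀ (r : ℝ) {Z : Matrix k k ℂ}, Z.IsHermitian → (r • Z).IsHermitian := by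
    intro r Z hZ
    rw [IsHermitian, conjTranspose_smul, hZ.eq]; simp
  refine aux_limit hM ((hsm a hfX).add (hsm b hfY)) f hf.1 fun e he => ?_
  set M := a • X + b • Y with hMdef
  set U : Matrix (k ⊕ k) (k ⊕ k) ℂ :=
    fromBlocks (c • (1 : Matrix k k ℂ)) (-(d • (1 : Matrix k k ℂ))) (d • (1 : Matrix k k ℂ)) (c • (1 : Matrix k k ℂ)) with hUdef
  have hUH : Uᴴ = fromBlocks (c • (1 : Matrix k k ℂ)) (d • (1 : Matrix k k ℂ)) (-(d • (1 : Matrix k k ℂ))) (c • (1 : Matrix k k ℂ)) := by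
    rw [hUdef, fromBlocks_conjTranspose]
    simp
  have hU : U * Uᴴ = 1 := by
    rw [hUH, hUdef, fromBlocks_multiply, ← fromBlocks_one]
    congr 1
    · simp [smul_smul, hc, hd, ← add_smul, hab]
    · simp [smul_smul, mul_comm]
    · simp [smul_smul, mul_comm]
    · simp [smul_smul, hc, hd, ← add_smul, add_comm b a, hab]
  have hconj : ∀ P Q : Matrix k k ℂ, Uᴴ * fromBlocks P 0 0 Q * U =
      fromBlocks (a • P + b • Q) ((c * d) • (Q - P)) ((c * d) • (Q - P)) (b • P + a • Q) := by
    intro P Q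
    rw [hUH, hUdef, fromBlocks_multiply, fromBlocks_multiply]
    congr 1
    · simp [smul_smul, hc, hd]
    · simp [smul_smul, smul_sub, mul_comm]; abel
    · simp [smul_smul, smul_sub, mul_comm]; abel
    · simp [smul_smul, hc, hd]
  set D : Matrix k k ℂ := (c * d) • (Y - X) with hD
  have hDH : D.IsHermitian := hsm _ (hY.1.sub hX.1)
  set M2 : Matrix k k ℂ := b • X + a • Y with hM2
  have hM2H : M2.IsHermitian := (hsm _ hX.1).add (hsm _ hY.1)
  have hDD : (Dᴴ * (e • (1 : Matrix k k ℂ))⁻¹ * D).IsHermitian :=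
    isHermitian_conjTranspose_mul_mul D (hsm e isHermitian_one).inv
  obtain ⟨l, hl⟩ := aux_bound (hM2H.add hDD)
  have hE : (e • (1 : Matrix k k ℂ)).PosDef := PosDef.one.smul he
  have hXY : (fromBlocks X 0 0 Y).PosSemidef := by
    haveI : Invertible (1 : Matrix k k ℂ) := invertibleOne
    have e1 : fromBlocks X 0 0 Y = (fromBlocks X 0 0 0 : Matrix (k ⊕ k) (k ⊕ k) ℂ) + fromBlocks 0 0 0 Y := by
      simp [fromBlocks_add]
    have e2 : (fromBlocks X 0 0 0 : Matrix (k ⊕ k) (k ⊕ k) ℂ) =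
        (fromCols 1 0 : Matrix k (k ⊕ k) ℂ)ᴴ * X * (fromCols 1 0 : Matrix k (k ⊕ k) ℂ) := by
      ext i j
      rcases i with i | i <;> rcases j with j | j <;>
        simp [Matrix.mul_apply, Matrix.one_apply, Finset.sum_ite_eq, apply_ite]
    have e3 : (fromBlocks 0 0 0 Y : Matrix (k ⊕ k) (k ⊕ k) ℂ) =
        (fromCols 0 1 : Matrix k (k ⊕ k) ℂ)ᴴ * Y * (fromCols 0 1 : Matrix k (k ⊕ k) ℂ) := by
      ext i j
      rcases i with i | i <;> rcases j with j | j <;>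
        simp [Matrix.mul_apply, Matrix.one_apply, Finset.sum_ite_eq, apply_ite]
    rw [e1, e2, e3]
    exact (hX.conjTranspose_mul_mul_same _).add (hY.conjTranspose_mul_mul_same _)
  have hle : LoewnerLE (Uᴴ * fromBlocks X 0 0 Y * U)
      (fromBlocks (M + e • (1 : Matrix k k ℂ)) 0 0 (l • (1 : Matrix k k ℂ))) := by
    rw [LoewnerLE, hconj, ← hD, ← hMdef, ← hM2]
    have : fromBlocks (M + e • (1 : Matrix k k ℂ)) 0 0 (l • (1 : Matrix k k ℂ)) - fromBlocks M D D M2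
        = fromBlocks (e • (1 : Matrix k k ℂ)) (-D) (-D)ᴴ (l • (1 : Matrix k k ℂ) - M2) := by
      rw [conjTranspose_neg, hDH.eq, sub_eq_add_neg, fromBlocks_neg, fromBlocks_add]
      congr 1 <;> simp [sub_eq_add_neg]
    rw [this]
    haveI : Invertible (e • (1 : Matrix k k ℂ)) := hE.isUnit.invertible
    rw [PosDef.fromBlocks₁₁ _ _ hE]
    rw [conjTranspose_neg, Matrix.neg_mul, Matrix.neg_mul, Matrix.mul_neg, neg_neg, sub_sub]
    exact hl
  have h := hf.2.2 (k ⊕ k) _ _ (hXY.conjTranspose_mul_mul_same U) hle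
  rw [LoewnerLE, aux_cfc_conj hXY.1 hU, aux_cfc_blocks hX.1 hY.1, hconj,
    aux_cfc_blocks (hM.1.add hE.1) (hsm l isHermitian_one)] at h
  have h2 := h.submatrix (Sum.inl : k → k ⊕ k)
  convert h2 using 1
  ext i j
  simp

theorem aux_scale {k : Type} [Fintype k] [DecidableEq k] (f : ℝ → ℝ) (hf : OpMonotone f)
    {H : Matrix k k ℂ} (hH : H.PosSemidef) (K : ℝ) (hK : 1 ≤ K) :
    (K • cfc f H - cfc f (K • H)).PosSemidef := by
  have hK0 : 0 < K := by linarith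
  have h := aux_concave f hf (hH.smul hK0.le) (PosSemidef.zero (n := k) (R := ℂ)) K⁻¹ (1 - K⁻¹)
    (by positivity) (by have := inv_le_one_of_one_le₀ hK; linarith) (by ring)
  have h0 : (cfc f (0 : Matrix k k ℂ)).PosSemidef := by
    rw [cfc_apply_zero, Algebra.algebraMap_eq_smul_one]
    exact PosSemidef.one.smul (hf.2.1 0 le_rfl)
  have h1 := (h.add (h0.smul (show 0 ≤ 1 - K⁻¹ by have := inv_le_one_of_one_le₀ hK; linarith))).smul hK0.le
  convert h1 using 1
  rw [smul_smul, inv_mul_cancel₀ hK0.ne']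
  simp only [one_smul, smul_zero, add_zero, smul_add, smul_sub, smul_smul, mul_inv_cancel₀ hK0.ne']
  abel

theorem aux_prod {k : Type} [Fintype k] [DecidableEq k] {S E F : Matrix k k ℂ} (hS : S.PosDef)
    (hE : E.PosSemidef) (hF : F.PosSemidef) (g : ℝ) (hg : 0 ≤ g) (hEF : E + F = g • S) :
    (E * S⁻¹ * F).PosSemidef := by
  have hSu : IsUnit S.det := (isUnit_iff_isUnit_det S).mp hS.isUnit
  have hSi : S⁻¹ᴴ = S⁻¹ := hS.inv.1.eq
  have hF' : F = g • S - E := by rw [← hEF]; abel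
  rcases hg.eq_or_lt with rfl | hg
  · rw [zero_smul] at hEF
    have hE0 : E = 0 := by
      rw [← hE.trace_eq_zero_iff]
      have h1 := hE.trace_nonneg
      have h2 := hF.trace_nonneg
      have h3 : E.trace + F.trace = 0 := by rw [← trace_add, hEF, trace_zero]
      exact le_antisymm (by rw [← h3]; exact le_add_of_nonneg_right h2) h1
    rw [hE0]; simpa using PosSemidef.zero
  · have hc : E * S⁻¹ * F = F * S⁻¹ * E := by
      rw [hF', Matrix.mul_sub, Matrix.sub_mul, Matrix.sub_mul, Matrix.mul_smul, Matrix.smul_mul,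
        Matrix.smul_mul, Matrix.mul_assoc E, nonsing_inv_mul _ hSu, mul_nonsing_inv _ hSu]
      simp
    have h1 := (hF.mul_mul_conjTranspose_same (E * S⁻¹)).add (hE.mul_mul_conjTranspose_same (F * S⁻¹))
    have h2 := h1.smul (inv_nonneg.mpr hg.le)
    convert h2 using 1
    rw [conjTranspose_mul, conjTranspose_mul, hSi, hE.1.eq, hF.1.eq, ← hc]
    have : E * S⁻¹ * F * (S⁻¹ * E) + E * S⁻¹ * F * (S⁻¹ * F) = g • (E * S⁻¹ * F) := by
      rw [← Matrix.mul_add, ← Matrix.mul_add, hEF, Matrix.mul_smul, nonsing_inv_mul _ hSu]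
      simp
    rw [← hc] at *
    rw [this, smul_smul, inv_mul_cancel₀ hg.ne', one_smul]

theorem aux_hmean_eq {k : Type} [Fintype k] [DecidableEq k] {A B : Matrix k k ℂ} (hA : A.PosDef)
    (hB : B.PosDef) : hmean A B = (2 : ℝ) • (A - A * (A + B)⁻¹ * A) := by
  have hAu : IsUnit A.det := (isUnit_iff_isUnit_det A).mp hA.isUnit
  have hBu : IsUnit B.det := (isUnit_iff_isUnit_det B).mp hB.isUnit
  have hSu : IsUnit (A + B).det := (isUnit_iff_isUnit_det _).mp (hA.add hB).isUnit
  rw [hmean]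
  apply inv_eq_left_inv
  have e1 : A - A * (A + B)⁻¹ * A = A * (A + B)⁻¹ * B := by
    have : A = A * (A + B)⁻¹ * (A + B) := by rw [Matrix.mul_assoc, nonsing_inv_mul _ hSu, Matrix.mul_one]
    nth_rewrite 1 [this]
    rw [Matrix.mul_add]; abel
  have e2 : A⁻¹ + B⁻¹ = B⁻¹ * (A + B) * A⁻¹ := by
    rw [Matrix.mul_add, Matrix.add_mul, nonsing_inv_mul _ hBu, Matrix.mul_assoc, mul_nonsing_inv _ hAu]
    simp [add_comm]
  rw [e1, e2, Matrix.smul_mul, Matrix.mul_smul, smul_smul]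
  have e3 : A * (A + B)⁻¹ * B * (B⁻¹ * (A + B) * A⁻¹) = 1 := by
    calc _ = A * ((A + B)⁻¹ * (B * B⁻¹) * (A + B)) * A⁻¹ := by simp only [Matrix.mul_assoc]
      _ = 1 := by
        rw [mul_nonsing_inv _ hBu, Matrix.mul_one, nonsing_inv_mul _ hSu, Matrix.mul_one,
          mul_nonsing_inv _ hAu]
  rw [e3]; norm_num

theorem aux_hmean_pos {k : Type} [Fintype k] [DecidableEq k] {A B : Matrix k k ℂ} (hA : A.PosDef)
    (hB : B.PosDef) : (hmean A B).PosDef := by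
  rw [hmean]
  exact ((hA.inv.add hB.inv).smul (show (0:ℝ) < 2⁻¹ by norm_num)).inv

theorem aux_ah {k : Type} [Fintype k] [DecidableEq k] {A B : Matrix k k ℂ} (hA : A.PosDef)
    (hB : B.PosDef) (s : ℝ) (hs : 0 < s) (hs1 : s ≤ 1) (h1 : (B - s • A).PosSemidef)
    (h2 : (A - s • B).PosSemidef) :
    (((1 + s) ^ 2 / (4 * s)) • hmean A B - ((2:ℝ)⁻¹ • A + (2:ℝ)⁻¹ • B)).PosSemidef := by
  have hS := hA.add hB
  have hSu : IsUnit (A + B).det := (isUnit_iff_isUnit_det _).mp hS.isUnit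
  have h := aux_prod hS h2 h1 (1 - s) (by linarith) (by simp only [sub_smul, smul_add, one_smul]; abel)
  have e1 : A - s • B = (1 + s) • A - s • (A + B) := by simp only [add_smul, smul_add, one_smul]; abel
  have e2 : B - s • A = (A + B) - (1 + s) • A := by simp only [add_smul, one_smul]; abel
  have key : (A - s • B) * (A + B)⁻¹ * (B - s • A) =
      (1 + s) ^ 2 • (A - A * (A + B)⁻¹ * A) - s • (A + B) := by
    rw [e1, e2]
    simp only [Matrix.sub_mul, Matrix.mul_sub, Matrix.smul_mul, Matrix.mul_smul]
    rw [Matrix.mul_assoc A (A + B)⁻¹ (A + B), nonsing_inv_mul _ hSu, mul_nonsing_inv _ hSu,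
      Matrix.mul_one, Matrix.one_mul, Matrix.one_mul]
    module
  rw [key] at h
  have h3 := h.smul (show 0 ≤ (2 * s)⁻¹ by positivity)
  convert h3 using 1
  rw [aux_hmean_eq hA hB, smul_sub (2 * s)⁻¹, smul_smul, smul_smul, smul_smul, ← smul_add]
  congr 2
  · field_simp; ring
  · field_simp

theorem polya_szego_monotone_st_le_one {n m : Type} [Fintype n] [DecidableEq n] [Fintype m] [DecidableEq m]
    (Φ : Matrix n n ℂ →ₗ[ℂ] Matrix m m ℂ)
    (hΦ : ∀ X : Matrix n n ℂ, X.PosSemidef → (Φ X).PosSemidef)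
    (f : ℝ → ℝ) (hf : OpMonotone f)
    (A B : Matrix n n ℂ) (hA : A.PosDef) (hB : B.PosDef)
    (s t : ℝ) (hs : 0 < s) (hst : s ≤ t) (h1 : s * t ≤ 1)
    (hsA : LoewnerLE (s • A) B) (htA : LoewnerLE B (t • A)) :
    LoewnerLE ((2 : ℝ)⁻¹ • (Φ (cfc f A) + Φ (cfc f B)))
      ((((Real.sqrt s + Real.sqrt t) / (2 * Real.sqrt (s * t))) ^ 2) • Φ (cfc f (hmean A B))) := by
  have hs1 : s ≤ 1 := by nlinarith
  have ht : 0 < t := by linarith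
  have h2 : (A - s • B).PosSemidef := by
    have e : A - s • B = s • (t • A - B) + (1 - s * t) • A := by module
    rw [e]
    exact (PosSemidef.smul htA hs.le).add (hA.posSemidef.smul (by linarith))
  have h3 := aux_ah hA hB s hs hs1 hsA h2
  set K : ℝ := ((Real.sqrt s + Real.sqrt t) / (2 * Real.sqrt (s * t))) ^ 2 with hKdef
  have hK : (1 + s) ^ 2 / (4 * s) ≤ K := by
    rw [hKdef, Real.sqrt_mul hs.le]
    obtain ⟨x, hx, rfl⟩ : ∃ x : ℝ, 0 < x ∧ s = x ^ 2 := ⟨√s, Real.sqrt_pos.mpr hs, (Real.sq_sqrt hs.le).symm⟩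
    obtain ⟨y, hy, rfl⟩ : ∃ y : ℝ, 0 < y ∧ t = y ^ 2 := ⟨√t, Real.sqrt_pos.mpr ht, (Real.sq_sqrt ht.le).symm⟩
    rw [Real.sqrt_sq hx.le, Real.sqrt_sq hy.le]
    have hxy : x * y ≤ 1 := by
      by_contra hh
      push Not at hh
      nlinarith
    have e : (1 + x ^ 2) ^ 2 / (4 * x ^ 2) = ((1 + x ^ 2) / (2 * x)) ^ 2 := by
      field_simp; norm_num
    rw [e]
    apply pow_le_pow_left₀ (by positivity)
    rw [div_le_div_iff₀ (by positivity) (by positivity)]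
    nlinarith [mul_nonneg (mul_pos hx hx).le (sub_nonneg.mpr hxy)]
  have hK1 : 1 ≤ K := by
    refine le_trans ?_ hK
    rw [le_div_iff₀ (by positivity)]
    nlinarith [sq_nonneg (1 - s)]
  set H := hmean A B with hH
  have hHp : H.PosDef := aux_hmean_pos hA hB
  have h4 : LoewnerLE ((2:ℝ)⁻¹ • A + (2:ℝ)⁻¹ • B) (K • H) := by
    rw [LoewnerLE]
    have := h3.add (hHp.posSemidef.smul (sub_nonneg.mpr hK))
    convert this using 1
    module
  have h5 := hf.2.2 n _ _ ((hA.posSemidef.smul (show (0:ℝ) ≤ 2⁻¹ by norm_num)).add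
    (hB.posSemidef.smul (show (0:ℝ) ≤ 2⁻¹ by norm_num))) h4
  have h6 := aux_concave f hf hA.posSemidef hB.posSemidef 2⁻¹ 2⁻¹ (by norm_num) (by norm_num) (by norm_num)
  have h7 := aux_scale f hf hHp.posSemidef K hK1
  have h8 := hΦ _ ((h7.add h5).add h6)
  rw [LoewnerLE]
  convert h8 using 1
  have hr : ∀ (r : ℝ) (Z : Matrix n n ℂ), Φ (r • Z) = r • Φ Z := fun r Z => Φ.map_smul_of_tower r Z
  simp only [map_add, map_sub, hr, smul_add]
  abel
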